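/- arXiv:1906.02257 — 3 statements merged into one kernel-verified Lean document; each statement's English description precedes it below -/
import Mathlib

section
/- Let α, β ≥ 0 be real numbers with α + β > 3/2, and let ε > 0. Then there exists a constant C > 0 such that for every n ∈ ℤ³, the sum ∑_{n₁ ∈ ℤ³} ⟨n₁⟩^{-2α} ⟨n − n₁⟩^{-2β} is at most C ⟨n⟩^{-min(2α, 2β, 2α+2β−3) + ε}. -/
/-- Euclidean norm of a lattice point `n ∈ ℤ³`. -/
noncomputable def znorm (n : Fin 3 → ℤ) : ℝ := Real.sqrt (∑ i, ((n i : ℝ)) ^ 2)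

/-- Japanese bracket `⟨n⟩ = (1 + |n|²)^{1/2}` of a lattice point `n ∈ ℤ³`. -/
noncomputable def jb (n : Fin 3 → ℤ) : ℝ := Real.sqrt (1 + ∑ i, ((n i : ℝ)) ^ 2)

/-!
In a triangle with sides `x`, `y`, `z ≥ 1` and `y ≤ x`, the longer side `x` satisfies
`z / 2 ≤ x ≤ 2 y z`. For `e ≤ a` one may therefore trade `x ^ (-e)` for `z ^ (-e)`, at the cost of a
power of `y` when `e < 0`, and bound the remaining decaying factor `x ^ (-(a - e))` by
`y ^ (-(a - e))`. With `x = ⟨k⟩`, `y = ⟨n - k⟩` (or the other way round) and `z = ⟨n⟩`, the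
convolution is thus at most `⟨n⟩ ^ (-e)` times a sum of brackets that does not depend on `n`, and
this sum converges as soon as `e < a + b - d` and `d < a + b`, with `d` the rank of the lattice.
-/

section Triangle

variable {a b e x y z : ℝ}

theorem rpow_neg_le_of_triangle (hy : 1 ≤ y) (hz : 1 ≤ z) (hyx : y ≤ x) (hzxy : z ≤ x + y)
    (hxyz : x ≤ y + z) : x ^ (-e) ≤ 2 ^ |e| * z ^ (-e) * y ^ (max e 0 - e) := by
  have hx : 0 < x := by linarith
  rcases le_total 0 e with he | he
  · have hzx : z / 2 ≤ x := by linarith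
    calc x ^ (-e) ≤ (z / 2) ^ (-e) := Real.rpow_le_rpow_of_nonpos (by positivity) hzx (by linarith)
      _ = 2 ^ |e| * z ^ (-e) * y ^ (max e 0 - e) := by
        rw [abs_of_nonneg he, max_eq_left he, sub_self, Real.rpow_zero, mul_one,
          Real.div_rpow (by positivity) zero_le_two, Real.rpow_neg zero_le_two, div_inv_eq_mul,
          mul_comm]
  · have hxzy : x ≤ 2 * z * y := by nlinarith
    calc x ^ (-e) ≤ (2 * z * y) ^ (-e) := Real.rpow_le_rpow hx.le hxzy (by linarith)
      _ = 2 ^ |e| * z ^ (-e) * y ^ (max e 0 - e) := by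
        rw [abs_of_nonpos he, max_eq_right he, zero_sub,
          Real.mul_rpow (by positivity) (by positivity),
          Real.mul_rpow zero_le_two (by positivity)]

theorem rpow_neg_mul_rpow_neg_le_of_triangle_of_le (hy : 1 ≤ y) (hz : 1 ≤ z) (hyx : y ≤ x)
    (hzxy : z ≤ x + y) (hxyz : x ≤ y + z) (hea : e ≤ a) :
    x ^ (-a) * y ^ (-b) ≤ 2 ^ |e| * z ^ (-e) * y ^ (-(a + b - max e 0)) := by
  have hy₀ : 0 < y := by linarith
  have hx₀ : 0 < x := by linarith
  have hdecay : x ^ (-(a - e)) ≤ y ^ (-(a - e)) :=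
    Real.rpow_le_rpow_of_nonpos hy₀ hyx (by linarith)
  calc x ^ (-a) * y ^ (-b) = x ^ (-e) * x ^ (-(a - e)) * y ^ (-b) := by
        rw [← Real.rpow_add hx₀]; ring_nf
    _ ≤ 2 ^ |e| * z ^ (-e) * y ^ (max e 0 - e) * y ^ (-(a - e)) * y ^ (-b) := by
        gcongr
        exact rpow_neg_le_of_triangle hy hz hyx hzxy hxyz
    _ = 2 ^ |e| * z ^ (-e) * y ^ (-(a + b - max e 0)) := by
        rw [mul_assoc, mul_assoc, ← Real.rpow_add hy₀, ← Real.rpow_add hy₀]; ring_nf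

theorem rpow_neg_mul_rpow_neg_le_of_triangle (hx : 1 ≤ x) (hy : 1 ≤ y) (hz : 1 ≤ z)
    (hzxy : z ≤ x + y) (hxyz : x ≤ y + z) (hyxz : y ≤ x + z) (hea : e ≤ a) (heb : e ≤ b) :
    x ^ (-a) * y ^ (-b) ≤
      2 ^ |e| * z ^ (-e) * (x ^ (-(a + b - max e 0)) + y ^ (-(a + b - max e 0))) := by
  rcases le_total y x with hyx | hxy
  · refine (rpow_neg_mul_rpow_neg_le_of_triangle_of_le hy hz hyx hzxy hxyz hea).trans ?_
    gcongr
    exact le_add_of_nonneg_left (by positivity)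
  · rw [add_comm] at hzxy
    rw [mul_comm, add_comm a b]
    refine (rpow_neg_mul_rpow_neg_le_of_triangle_of_le hx hz hxy hzxy hyxz heb).trans ?_
    gcongr
    exact le_add_of_nonneg_right (by positivity)

end Triangle

/-- The Japanese bracket `⟨x⟩ = (1 + ‖x‖²)^{1/2}`, the smooth substitute for `max 1 ‖x‖` by which
decay is measured. -/
noncomputable def japaneseBracket {E : Type*} [Norm E] (x : E) : ℝ := √(1 + ‖x‖ ^ 2)

section Bracket

variable {G : Type*} [SeminormedAddGroup G]

theorem one_le_japaneseBracket (x : G) : 1 ≤ japaneseBracket x :=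
  Real.one_le_sqrt.2 (le_add_of_nonneg_right (sq_nonneg _))

theorem japaneseBracket_pos (x : G) : 0 < japaneseBracket x :=
  zero_lt_one.trans_le (one_le_japaneseBracket x)

theorem norm_le_japaneseBracket (x : G) : ‖x‖ ≤ japaneseBracket x :=
  Real.le_sqrt_of_sq_le (le_add_of_nonneg_left zero_le_one)

theorem japaneseBracket_neg (x : G) : japaneseBracket (-x) = japaneseBracket x := by
  simp only [japaneseBracket, norm_neg]

theorem japaneseBracket_add_le (x y : G) :
    japaneseBracket (x + y) ≤ japaneseBracket x + japaneseBracket y := by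
  have sq_bracket (z : G) : japaneseBracket z ^ 2 = 1 + ‖z‖ ^ 2 := Real.sq_sqrt (by positivity)
  have hprod : ‖x‖ * ‖y‖ ≤ japaneseBracket x * japaneseBracket y :=
    mul_le_mul (norm_le_japaneseBracket x) (norm_le_japaneseBracket y) (norm_nonneg y)
      (japaneseBracket_pos x).le
  refine Real.sqrt_le_iff.2
    ⟨(add_pos (japaneseBracket_pos x) (japaneseBracket_pos y)).le, ?_⟩
  calc 1 + ‖x + y‖ ^ 2 ≤ 1 + (‖x‖ + ‖y‖) ^ 2 := by gcongr; exact norm_add_le x y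
    _ ≤ (japaneseBracket x + japaneseBracket y) ^ 2 := by
      linarith [add_sq ‖x‖ ‖y‖, add_sq (japaneseBracket x) (japaneseBracket y), sq_bracket x,
        sq_bracket y]

theorem japaneseBracket_rpow_neg_mul_le {a b e : ℝ} (hea : e ≤ a) (heb : e ≤ b) (x y : G) :
    japaneseBracket y ^ (-a) * japaneseBracket (x - y) ^ (-b) ≤
      2 ^ |e| * japaneseBracket x ^ (-e) * (japaneseBracket y ^ (-(a + b - max e 0)) +
        japaneseBracket (x - y) ^ (-(a + b - max e 0))) := by
  refine rpow_neg_mul_rpow_neg_le_of_triangle (one_le_japaneseBracket _)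
    (one_le_japaneseBracket _) (one_le_japaneseBracket _) ?_ ?_ ?_ hea heb
  · simpa only [sub_add_cancel, add_comm] using japaneseBracket_add_le (x - y) y
  · rw [← japaneseBracket_neg (x - y), neg_sub]
    simpa only [sub_add_cancel] using japaneseBracket_add_le (y - x) x
  · simpa only [← sub_eq_add_neg, japaneseBracket_neg, add_comm] using
      japaneseBracket_add_le x (-y)

theorem convolution_japaneseBracket_le {a b e : ℝ} (hea : e ≤ a) (heb : e ≤ b)
    (hsum : Summable fun y : G => japaneseBracket y ^ (-(a + b - max e 0))) (x : G) :
    (Summable fun y => japaneseBracket y ^ (-a) * japaneseBracket (x - y) ^ (-b)) ∧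
      ∑' y, japaneseBracket y ^ (-a) * japaneseBracket (x - y) ^ (-b) ≤
        2 ^ |e| * (2 * ∑' y : G, japaneseBracket y ^ (-(a + b - max e 0))) *
          japaneseBracket x ^ (-e) := by
  set s := a + b - max e 0
  have hreflect : Summable fun y : G => japaneseBracket (x - y) ^ (-s) :=
    (Equiv.subLeft x).summable_iff.2 hsum
  have tsum_reflect :
      ∑' y : G, japaneseBracket (x - y) ^ (-s) = ∑' y : G, japaneseBracket y ^ (-s) :=
    (Equiv.subLeft x).tsum_eq fun y => japaneseBracket y ^ (-s)
  have hmajorant := (hsum.add hreflect).mul_left (2 ^ |e| * japaneseBracket x ^ (-e))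
  have hconv : Summable fun y => japaneseBracket y ^ (-a) * japaneseBracket (x - y) ^ (-b) :=
    hmajorant.of_nonneg_of_le (fun y => mul_nonneg (Real.rpow_nonneg (japaneseBracket_pos y).le _)
      (Real.rpow_nonneg (japaneseBracket_pos (x - y)).le _))
      (japaneseBracket_rpow_neg_mul_le hea heb x)
  refine ⟨hconv,
    (hconv.tsum_le_tsum (japaneseBracket_rpow_neg_mul_le hea heb x) hmajorant).trans_eq ?_⟩
  rw [tsum_mul_left, hsum.tsum_add hreflect, tsum_reflect]
  ring

end Bracket

section Lattice

variable {E : Type*} [NormedAddCommGroup E] [NormedSpace ℝ E] [FiniteDimensional ℝ E]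
  (L : Submodule ℤ E) [DiscreteTopology L]

theorem summable_japaneseBracket_rpow_neg {s : ℝ} (hs : Module.finrank ℤ L < s) :
    Summable fun x : L => japaneseBracket x ^ (-s) := by
  refine (ZLattice.summable_norm_rpow L (-s) (by linarith)).of_norm_bounded_eventually ?_
  filter_upwards [(Set.finite_singleton (0 : L)).compl_mem_cofinite] with x hx
  rw [Real.norm_of_nonneg (Real.rpow_nonneg (japaneseBracket_pos x).le _)]
  refine Real.rpow_le_rpow_of_nonpos (norm_pos_iff.2 hx) (norm_le_japaneseBracket x) ?_
  linarith [(Module.finrank ℤ L).cast_nonneg (α := ℝ)]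

theorem convolution_estimate_general {a b ε : ℝ} (hab : Module.finrank ℤ L < a + b) (hε : 0 < ε) :
    ∃ C > 0, ∀ x : L,
      (Summable fun y : L => japaneseBracket y ^ (-a) * japaneseBracket (x - y) ^ (-b)) ∧
        ∑' y : L, japaneseBracket y ^ (-a) * japaneseBracket (x - y) ^ (-b) ≤
          C * japaneseBracket x ^ (-(min a (min b (a + b - Module.finrank ℤ L))) + ε) := by
  set d := (Module.finrank ℤ L : ℝ)
  set e := min a (min b (a + b - d)) - ε with he
  obtain ⟨hea, heb, hed⟩ : e < a ∧ e < b ∧ e < a + b - d := by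
    simpa only [lt_min_iff] using sub_lt_self (min a (min b (a + b - d))) hε
  have hsum : Summable fun y : L => japaneseBracket y ^ (-(a + b - max e 0)) :=
    summable_japaneseBracket_rpow_neg L (lt_sub_comm.1 (max_lt hed (sub_pos.2 hab)))
  have htsum : 0 < ∑' y : L, japaneseBracket y ^ (-(a + b - max e 0)) :=
    hsum.tsum_pos (fun y => Real.rpow_nonneg (japaneseBracket_pos y).le _) 0
      (Real.rpow_pos_of_pos (japaneseBracket_pos _) _)
  refine ⟨_, mul_pos (Real.rpow_pos_of_pos two_pos |e|) (mul_pos two_pos htsum), fun x => ?_⟩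
  rw [neg_add_eq_sub, ← neg_sub _ ε, ← he]
  exact convolution_japaneseBracket_le hea.le heb.le hsum x

end Lattice

section IntegerPoints

variable (ι : Type*) [Fintype ι]

/-- The lattice `ℤ^ι` of integer points of Euclidean space, as the integer span of the standard
basis. -/
noncomputable abbrev integerLattice : Submodule ℤ (EuclideanSpace ℝ ι) :=
  Submodule.span ℤ (Set.range (EuclideanSpace.basisFun ι ℝ).toBasis)

/-- Integer vectors as points of `integerLattice ι`; it is used to carry estimates for lattices in
normed spaces over to functions `ι → ℤ`. -/
noncomputable def integerLatticeEquiv : (ι → ℤ) ≃ₗ[ℤ] integerLattice ι :=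
  ((EuclideanSpace.basisFun ι ℝ).toBasis.restrictScalars ℤ).equivFun.symm

theorem finrank_integerLattice : Module.finrank ℤ (integerLattice ι) = Fintype.card ι := by
  rw [← (integerLatticeEquiv ι).finrank_eq, Module.finrank_fintype_fun_eq_card]

variable {ι}

theorem integerLatticeEquiv_apply (n : ι → ℤ) (i : ι) :
    (integerLatticeEquiv ι n : EuclideanSpace ℝ ι) i = n i := by
  calc (integerLatticeEquiv ι n : EuclideanSpace ℝ ι) i
      = (EuclideanSpace.basisFun ι ℝ).toBasis.repr (integerLatticeEquiv ι n) i := by simp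
    _ = ((integerLatticeEquiv ι).symm (integerLatticeEquiv ι n) i : ℤ) :=
      (Module.Basis.restrictScalars_repr_apply ℤ _ _ i).symm
    _ = n i := by rw [LinearEquiv.symm_apply_apply]

theorem japaneseBracket_integerLatticeEquiv (n : Fin 3 → ℤ) :
    japaneseBracket (integerLatticeEquiv (Fin 3) n) = jb n := by
  simp only [japaneseBracket, jb, Submodule.coe_norm, EuclideanSpace.norm_sq_eq,
    integerLatticeEquiv_apply, Real.norm_eq_abs, sq_abs]

end IntegerPoints

theorem convolution_estimate (α β ε : ℝ) (hα : 0 ≤ α) (hβ : 0 ≤ β)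
    (hαβ : 3 / 2 < α + β) (hε : 0 < ε) :
    ∃ C > 0, ∀ n : Fin 3 → ℤ,
      ∑' n₁ : Fin 3 → ℤ, jb n₁ ^ (-(2 * α)) * jb (n - n₁) ^ (-(2 * β))
        ≤ C * jb n ^ (-(min (2 * α) (min (2 * β) (2 * α + 2 * β - 3))) + ε) := by
  have hrank : (Module.finrank ℤ (integerLattice (Fin 3)) : ℝ) = 3 := by
    simp [finrank_integerLattice]
  obtain ⟨C, hC, hle⟩ := convolution_estimate_general (integerLattice (Fin 3))
    (a := 2 * α) (b := 2 * β) (by linarith) hε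
  refine ⟨C, hC, fun n => ?_⟩
  simpa only [hrank, ← (integerLatticeEquiv (Fin 3)).toEquiv.tsum_eq, LinearEquiv.coe_toEquiv,
    ← map_sub, japaneseBracket_integerLatticeEquiv] using (hle (integerLatticeEquiv (Fin 3) n)).2
end

section
/- Let k be a positive odd integer. For every (u₀, v₀) ∈ ℝ², there exist differentiable functions u, v : ℝ → ℝ with u(0) = u₀, v(0) = v₀, and for all t ∈ ℝ, u'(t) = v(t) and v'(t) = −u(t)^k. That is, the dispersionless nonlinear wave system has a global-in-time solution for every initial data. -/
/-!
The Hamiltonian is constant along solutions and, since `k + 1` is even, its level sets are bounded.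
Multiply the vector field by a smooth cutoff equal to `1` on a ball containing the level set of the
initial point. The truncated field is Lipschitz and bounded, hence has global integral curves. It is
still tangent to the level sets of the Hamiltonian, because rescaling a vector field pointwise does
not affect its first integrals. So the integral curve never leaves the region where the cutoff is
`1`, and it solves the original system.
-/

open Set Metric Bornology

section GlobalExistence

variable {E : Type*} [NormedAddCommGroup E] [NormedSpace ℝ E] {v : ℝ → E → E} {K L : NNReal}

theorem exists_isIntegralCurve_of_forall_Ioo (hlip : ∀ t, LipschitzWith K (v t)) {x : E}
    (hloc : ∀ T : ℝ, ∃ γ : ℝ → E, γ 0 = x ∧ IsIntegralCurveOn γ v (Ioo (-T) T)) :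
    ∃ γ : ℝ → E, γ 0 = x ∧ IsIntegralCurve γ v := by
  choose γ hγ_zero hγ using hloc
  have hderiv (T : ℝ) {t : ℝ} (ht : t ∈ Ioo (-T) T) : HasDerivAt (γ T) (v t (γ T t)) t :=
    (hγ T t ht).hasDerivAt (isOpen_Ioo.mem_nhds ht)
  have hagree {S T : ℝ} (hST : S ≤ T) : EqOn (γ S) (γ T) (Ioo (-S) S) := fun t ht ↦
    ODE_solution_unique_of_mem_Ioo (fun s _ ↦ (hlip s).lipschitzOnWith (s := univ))
      (t₀ := 0) (by grind) (fun s hs ↦ ⟨hderiv S hs, mem_univ _⟩)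
      (fun s hs ↦ ⟨hderiv T (by grind), mem_univ _⟩)
      ((hγ_zero S).trans (hγ_zero T).symm) ht
  have hmem (t : ℝ) : t ∈ Ioo (-(|t| + 1)) (|t| + 1) := abs_lt.mp (lt_add_one |t|)
  refine ⟨fun t ↦ γ (|t| + 1) t, hγ_zero _, fun t ↦ ?_⟩
  refine (hderiv _ (hmem t)).congr_of_eventuallyEq ?_
  filter_upwards [isOpen_Ioo.mem_nhds (hmem t)] with s hs
  rcases le_total (|s| + 1) (|t| + 1) with hle | hle
  · exact hagree hle (hmem s)
  · exact (hagree hle hs).symm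

variable [CompleteSpace E]

theorem exists_isIntegralCurveOn_Ioo_of_lipschitzWith_of_norm_le
    (hlip : ∀ t, LipschitzWith K (v t)) (hcont : ∀ y, Continuous (v · y))
    (hbound : ∀ t y, ‖v t y‖ ≤ L) (x : E) (T : ℝ) :
    ∃ γ : ℝ → E, γ 0 = x ∧ IsIntegralCurveOn γ v (Ioo (-T) T) := by
  rcases le_or_gt T 0 with hT | hT
  · exact ⟨fun _ ↦ x, rfl, fun t ht ↦ by grind⟩
  have hzero : (0 : ℝ) ∈ Icc (-T) T := by grind
  have hpicard : IsPicardLindelof v (tmin := -T) (tmax := T) ⟨0, hzero⟩ x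
      (L * T.toNNReal) 0 L K :=
    { lipschitzOnWith := fun t _ ↦ (hlip t).lipschitzOnWith
      continuousOn := fun y _ ↦ (hcont y).continuousOn
      norm_le := fun t _ y _ ↦ hbound t y
      mul_max_le := by simp [hT.le] }
  obtain ⟨γ, hγ_zero, hγ⟩ := hpicard.exists_eq_forall_mem_Icc_hasDerivWithinAt₀
  exact ⟨γ, hγ_zero, IsIntegralCurveOn.mono hγ Ioo_subset_Icc_self⟩

theorem exists_isIntegralCurve_of_hasCompactSupport {F : E → E} (hF : ContDiff ℝ 1 F)
    (hsupp : HasCompactSupport F) (x : E) :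
    ∃ γ : ℝ → E, γ 0 = x ∧ IsIntegralCurve γ (fun _ ↦ F) := by
  obtain ⟨K, hlip⟩ := hF.lipschitzWith_of_hasCompactSupport hsupp one_ne_zero
  obtain ⟨L, hbound⟩ := hF.continuous.bounded_above_of_compact_support hsupp
  exact exists_isIntegralCurve_of_forall_Ioo (fun _ ↦ hlip) <|
    exists_isIntegralCurveOn_Ioo_of_lipschitzWith_of_norm_le (L := L.toNNReal) (fun _ ↦ hlip)
      (fun _ ↦ continuous_const) (fun _ y ↦ (hbound y).trans L.le_coe_toNNReal) x

end GlobalExistence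

section FirstIntegral

variable {E G : Type*} [NormedAddCommGroup E] [NormedSpace ℝ E] [NormedAddCommGroup G]
  [NormedSpace ℝ G] {H : E → G} {F : E → E}

/-- A first integral (conserved quantity) of the autonomous system `x' = F x`, expressed
infinitesimally: the derivative of `H` annihilates `F`. -/
structure IsFirstIntegral (H : E → G) (F : E → E) : Prop where
  differentiable : Differentiable ℝ H
  fderiv_apply_eq_zero : ∀ x, fderiv ℝ H x (F x) = 0

namespace IsFirstIntegral

theorem smul (hH : IsFirstIntegral H F) (χ : E → ℝ) : IsFirstIntegral H (fun x ↦ χ x • F x) where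
  differentiable := hH.differentiable
  fderiv_apply_eq_zero x := by rw [map_smul, hH.fderiv_apply_eq_zero, smul_zero]

theorem apply_eq_of_isIntegralCurve (hH : IsFirstIntegral H F) {γ : ℝ → E}
    (hγ : IsIntegralCurve γ (fun _ ↦ F)) (s t : ℝ) : H (γ s) = H (γ t) := by
  have hderiv (r : ℝ) : HasDerivAt (H ∘ γ) 0 r := by
    simpa only [hH.fderiv_apply_eq_zero] using
      (hH.differentiable (γ r)).hasFDerivAt.comp_hasDerivAt r (hγ r)
  exact is_const_of_deriv_eq_zero (fun r ↦ (hderiv r).differentiableAt)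
    (fun r ↦ (hderiv r).deriv) s t

theorem exists_isIntegralCurve_of_isBounded [FiniteDimensional ℝ E] (hH : IsFirstIntegral H F)
    (hF : ContDiff ℝ 1 F) {x : E} (hbdd : IsBounded {y | H y = H x}) :
    ∃ γ : ℝ → E, γ 0 = x ∧ IsIntegralCurve γ (fun _ ↦ F) := by
  obtain ⟨R, hR, hlevel⟩ := hbdd.subset_closedBall_lt 0 0
  let χ : ContDiffBump (0 : E) := ⟨R, R + 1, hR, lt_add_one R⟩
  have : CompleteSpace E := FiniteDimensional.complete ℝ E
  obtain ⟨γ, hγ_zero, hγ⟩ := exists_isIntegralCurve_of_hasCompactSupport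
    (χ.contDiff.smul hF) χ.hasCompactSupport.smul_right x
  have hχ (t : ℝ) : χ (γ t) = 1 := χ.one_of_mem_closedBall <| hlevel <|
    ((hH.smul χ).apply_eq_of_isIntegralCurve hγ t 0).trans (congrArg H hγ_zero)
  exact ⟨γ, hγ_zero, fun t ↦ by simpa only [Pi.smul_apply', hχ, one_smul] using hγ t⟩

end IsFirstIntegral

end FirstIntegral

theorem abs_le_max_one_of_even_pow_le {n : ℕ} (hn : Even n) (hn₀ : n ≠ 0) {x c : ℝ}
    (h : x ^ n ≤ c) : |x| ≤ max 1 c := by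
  rcases le_total |x| 1 with hx | hx
  · exact le_max_of_le_left hx
  · refine le_max_of_le_right ?_
    calc |x| ≤ |x| ^ n := le_self_pow₀ hx hn₀
      _ = x ^ n := hn.pow_abs x
      _ ≤ c := h

section DispersionlessWave

/-- The vector field of the dispersionless nonlinear wave system `u' = v`, `v' = -u ^ k` on the
phase plane, whose points are the pairs `(u, v)`. -/
def waveField (k : ℕ) (p : ℝ × ℝ) : ℝ × ℝ := (p.2, -p.1 ^ k)

/-- The Hamiltonian `v ^ 2 / 2 + u ^ (k + 1) / (k + 1)` of the dispersionless nonlinear wave system,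
as a function of the pair `(u, v)`. -/
noncomputable def waveHamiltonian (k : ℕ) (p : ℝ × ℝ) : ℝ :=
  p.2 ^ 2 / 2 + p.1 ^ (k + 1) / (k + 1)

theorem contDiff_waveField (k : ℕ) {n : WithTop ℕ∞} : ContDiff ℝ n (waveField k) := by
  unfold waveField
  fun_prop

theorem hasFDerivAt_waveHamiltonian (k : ℕ) (p : ℝ × ℝ) :
    HasFDerivAt (waveHamiltonian k)
      (p.2 • ContinuousLinearMap.snd ℝ ℝ ℝ + p.1 ^ k • ContinuousLinearMap.fst ℝ ℝ ℝ) p := by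
  have hkinetic : HasDerivAt (fun y : ℝ ↦ y ^ 2 / 2) p.2 p.2 := by
    simpa using (hasDerivAt_pow 2 p.2).div_const 2
  have hpotential : HasDerivAt (fun y : ℝ ↦ y ^ (k + 1) / (k + 1)) (p.1 ^ k) p.1 := by
    refine ((hasDerivAt_pow (k + 1) p.1).div_const _).congr_deriv ?_
    rw [Nat.cast_succ, Nat.add_sub_cancel]
    field_simp
  exact (hkinetic.comp_hasFDerivAt p hasFDerivAt_snd).add
    (hpotential.comp_hasFDerivAt p hasFDerivAt_fst)

theorem isFirstIntegral_waveHamiltonian (k : ℕ) :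
    IsFirstIntegral (waveHamiltonian k) (waveField k) where
  differentiable p := (hasFDerivAt_waveHamiltonian k p).differentiableAt
  fderiv_apply_eq_zero p := by
    rw [(hasFDerivAt_waveHamiltonian k p).fderiv]
    simp [waveField, mul_comm]

theorem isBounded_setOf_waveHamiltonian_le {k : ℕ} (hk : Odd k) (c : ℝ) :
    IsBounded {p | waveHamiltonian k p ≤ c} := by
  refine isBounded_iff_forall_norm_le.mpr
    ⟨max (max 1 (c * (k + 1))) (max 1 (c * 2)), fun p (hp : waveHamiltonian k p ≤ c) ↦ ?_⟩
  have hkinetic : 0 ≤ p.2 ^ 2 / 2 := by positivity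
  have hpotential : 0 ≤ p.1 ^ (k + 1) / (k + 1) :=
    div_nonneg (hk.add_one.pow_nonneg p.1) (by positivity)
  have hu : p.1 ^ (k + 1) ≤ c * (k + 1) :=
    (div_le_iff₀ (by positivity)).mp ((le_add_of_nonneg_left hkinetic).trans hp)
  have hv : p.2 ^ 2 ≤ c * 2 :=
    (div_le_iff₀ two_pos).mp ((le_add_of_nonneg_right hpotential).trans hp)
  exact max_le_max (abs_le_max_one_of_even_pow_le hk.add_one k.succ_ne_zero hu)
    (abs_le_max_one_of_even_pow_le even_two two_ne_zero hv)

end DispersionlessWave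

theorem dispersionless_global_existence (k : ℕ) (hk_odd : Odd k) (hk_pos : 0 < k)
    (u₀ v₀ : ℝ) :
    ∃ u v : ℝ → ℝ, u 0 = u₀ ∧ v 0 = v₀ ∧
      ∀ t : ℝ, HasDerivAt u (v t) t ∧ HasDerivAt v (-(u t ^ k)) t := by
  have hbdd : IsBounded {p | waveHamiltonian k p = waveHamiltonian k (u₀, v₀)} :=
    (isBounded_setOf_waveHamiltonian_le hk_odd _).subset fun _ ↦ le_of_eq
  obtain ⟨γ, hγ_zero, hγ⟩ :=
    (isFirstIntegral_waveHamiltonian k).exists_isIntegralCurve_of_isBounded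
      (contDiff_waveField k) hbdd
  exact ⟨fun t ↦ (γ t).1, fun t ↦ (γ t).2, congrArg Prod.fst hγ_zero, congrArg Prod.snd hγ_zero,
    fun t ↦ ⟨(hγ t).fst, (hγ t).snd⟩⟩
end

section
/- Let k be a positive odd integer, let (u₀, v₀) ∈ ℝ² with (u₀, v₀) ≠ (0, 0), and let u, v : ℝ → ℝ be differentiable functions satisfying u' = v, v' = −u^k and (u(0), v(0)) = (u₀, v₀). Set H₀ := v₀²/2 + u₀^{k+1}/(k+1) (which is strictly positive), U := ((k+1) H₀)^{1/(k+1)}, and T := 4 ∫₀^U ( 2 ( H₀ − u^{k+1}/(k+1) ) )^{-1/2} du. Then the solution is periodic with period T: for all t ∈ ℝ, u(t + T) = u(t) and v(t + T) = v(t). -/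
open MeasureTheory

/-!
A Newton equation `u'' = -f(u)` is invariant under time reversal and, when `f` is odd, under
`u ↦ -u`. By uniqueness, a motion is therefore symmetric about each instant where its velocity
vanishes and antisymmetric about each instant where its position vanishes. If `τ` is the time
needed to go from a zero of the position to the next zero of the velocity, composing the two
reflections gives `u (t + 2τ) = -u t`, so `4τ` is a period. A restoring force provides both
instants, and separating variables in the conserved energy expresses `τ` as an integral.
-/

section RealCalculus

variable {a b : ℝ}

lemma exists_neg_of_hasDerivAt_le_neg {g g' : ℝ → ℝ} {c : ℝ}
    (hg : ∀ t, a ≤ t → HasDerivAt g (g' t) t) (hc : 0 < c) (hle : ∀ t, a ≤ t → g' t ≤ -c) :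
    ∃ t, a ≤ t ∧ g t < 0 := by
  have hat : a ≤ a + (|g a| + 1) / c := le_add_of_nonneg_right (by positivity)
  refine ⟨a + (|g a| + 1) / c, hat, ?_⟩
  have hslope : g (a + (|g a| + 1) / c) - g a ≤ -c * (a + (|g a| + 1) / c - a) := by
    refine (convex_Ici a).image_sub_le_mul_sub_of_deriv_le (HasDerivAt.continuousOn hg)
      (fun t ht => (hg t (interior_subset ht)).differentiableAt.differentiableWithinAt)
      (fun t ht => ?_) a Set.self_mem_Ici _ hat hat
    rw [(hg t (interior_subset ht)).deriv]
    exact hle t (interior_subset ht)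
  have hdrop : -c * (a + (|g a| + 1) / c - a) = -(|g a| + 1) := by
    field_simp
    ring
  linarith [le_abs_self (g a)]

lemma exists_first_zero {g : ℝ → ℝ} (hg : ContinuousOn g (Set.Icc a b)) (hab : a ≤ b)
    (ha : 0 < g a) (hb : g b ≤ 0) :
    ∃ c, a < c ∧ g c = 0 ∧ ∀ t ∈ Set.Ico a c, 0 < g t := by
  have hcompact : IsCompact (Set.Icc a b ∩ g ⁻¹' Set.Iic 0) :=
    isCompact_Icc.of_isClosed_subset (hg.preimage_isClosed_of_isClosed isClosed_Icc isClosed_Iic)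
      Set.inter_subset_left
  obtain ⟨c, ⟨⟨hac, hcb⟩, hgc⟩, hleast⟩ := hcompact.exists_isLeast ⟨b, ⟨hab, le_rfl⟩, hb⟩
  obtain ⟨z, ⟨haz, hzc⟩, hgz⟩ :=
    intermediate_value_Icc' hac (hg.mono (Set.Icc_subset_Icc_right hcb)) ⟨hgc, ha.le⟩
  obtain rfl : z = c := hzc.antisymm (hleast ⟨⟨haz, hzc.trans hcb⟩, hgz.le⟩)
  refine ⟨z, haz.lt_of_ne fun h => ha.ne' (h ▸ hgz), hgz, fun t ht => ?_⟩
  by_contra! hgt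
  exact ht.2.not_ge (hleast ⟨⟨ht.1, ht.2.le.trans hcb⟩, hgt⟩)

lemma strictMonoOn_Ici_of_hasDerivAt_pos {g g' : ℝ → ℝ} (hg : ∀ x, HasDerivAt g (g' x) x)
    (hpos : ∀ x, a < x → 0 < g' x) : StrictMonoOn g (Set.Ici a) :=
  strictMonoOn_of_hasDerivWithinAt_pos (convex_Ici a)
    (HasDerivAt.continuousOn fun x _ => hg x) (fun x _ => (hg x).hasDerivWithinAt)
    fun x hx => hpos x (by rwa [interior_Ici] at hx)

lemma even_of_hasDerivAt_odd {F f : ℝ → ℝ} (hF : ∀ x, HasDerivAt F (f x) x)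
    (hodd : Function.Odd f) : Function.Even F := by
  have hderiv : ∀ x, HasDerivAt (fun y => F (-y) - F y) 0 x := fun x => by
    simpa [hodd x] using ((hF (-x)).scomp x (hasDerivAt_neg x)).fun_sub (hF x)
  intro x
  have hconst := is_const_of_deriv_eq_zero (fun y => (hderiv y).differentiableAt)
    (fun y => (hderiv y).deriv) x 0
  simpa [sub_eq_zero] using hconst

lemma eq_of_hasDerivAt_of_contDiff {E : Type*} [NormedAddCommGroup E] [NormedSpace ℝ E]
    [CompleteSpace E] {X : E → E} (hX : ContDiff ℝ 1 X) {γ₁ γ₂ : ℝ → E}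
    (h₁ : ∀ t, HasDerivAt γ₁ (X (γ₁ t)) t) (h₂ : ∀ t, HasDerivAt γ₂ (X (γ₂ t)) t)
    {s : ℝ} (hs : γ₁ s = γ₂ s) : γ₁ = γ₂ :=
  isMIntegralCurve_Ioo_eq_of_contMDiff_boundaryless
    (contMDiff_vectorSpace_iff_contDiff.2 hX)
    (fun t => (h₁ t).hasFDerivAt.hasMFDerivAt) (fun t => (h₂ t).hasFDerivAt.hasMFDerivAt) hs

lemma abs_le_of_sq_add_even_eq {F : ℝ → ℝ} (hF_even : Function.Even F)
    (hF_mono : StrictMonoOn F (Set.Ici 0)) {x y U : ℝ} (hU : 0 ≤ U)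
    (hE : y ^ 2 / 2 + F x = F U) : |x| ≤ U := by
  have hF_abs : F |x| = F x := by
    rcases abs_choice x with h | h <;> rw [h]
    exact hF_even x
  rw [← hF_mono.le_iff_le (abs_nonneg x) hU, hF_abs]
  linarith [sq_nonneg y]

end RealCalculus

/-- `u` and `v` are the position and the velocity of a motion, defined for all times, under
Newton's equation `u'' = -f(u)`, written as a first order system. -/
structure IsNewtonMotion (f u v : ℝ → ℝ) : Prop where
  hasDerivAt_position : ∀ t, HasDerivAt u (v t) t
  hasDerivAt_velocity : ∀ t, HasDerivAt v (-f (u t)) t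

/-- The time a motion of energy `E` in the potential `F` takes to go from the origin to its
amplitude `U`. Since `F U = E`, the integrand is singular at `U`. -/
noncomputable def quarterPeriod (F : ℝ → ℝ) (E U : ℝ) : ℝ :=
  ∫ x in (0 : ℝ)..U, (2 * (E - F x)) ^ (-(1 / 2) : ℝ)

namespace IsNewtonMotion

variable {f F u v : ℝ → ℝ}

section Symmetries

lemma timeReversal (h : IsNewtonMotion f u v) (s : ℝ) :
    IsNewtonMotion f (fun t => u (s - t)) (fun t => -v (s - t)) where
  hasDerivAt_position t := (h.hasDerivAt_position (s - t)).comp_const_sub s t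
  hasDerivAt_velocity t := by
    simpa using ((h.hasDerivAt_velocity (s - t)).comp_const_sub s t).fun_neg

lemma neg (h : IsNewtonMotion f u v) (hodd : Function.Odd f) :
    IsNewtonMotion f (fun t => -u t) (fun t => -v t) where
  hasDerivAt_position t := (h.hasDerivAt_position t).fun_neg
  hasDerivAt_velocity t := by simpa [hodd (u t)] using (h.hasDerivAt_velocity t).fun_neg

lemma unique (hf : ContDiff ℝ 1 f) {p q : ℝ → ℝ} (h : IsNewtonMotion f u v)
    (h' : IsNewtonMotion f p q) {s : ℝ} (hu : u s = p s) (hv : v s = q s) (t : ℝ) :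
    u t = p t ∧ v t = q t := by
  have hX : ContDiff ℝ 1 fun x : ℝ × ℝ => (x.2, -f x.1) := by fun_prop
  have heq := eq_of_hasDerivAt_of_contDiff hX
    (fun t => (h.hasDerivAt_position t).prodMk (h.hasDerivAt_velocity t))
    (fun t => (h'.hasDerivAt_position t).prodMk (h'.hasDerivAt_velocity t))
    (Prod.ext hu hv)
  exact Prod.mk.inj (congrFun heq t)

lemma reflect_of_velocity_eq_zero (h : IsNewtonMotion f u v) (hf : ContDiff ℝ 1 f) {s : ℝ}
    (hs : v s = 0) (t : ℝ) : u (2 * s - t) = u t ∧ v (2 * s - t) = -v t := by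
  have hmid : 2 * s - s = s := by ring
  obtain ⟨hu, hv⟩ := h.unique hf (h.timeReversal (2 * s)) (s := s) (by simp [hmid])
    (by simp [hmid, hs]) t
  exact ⟨hu.symm, by rw [hv, neg_neg]⟩

lemma reflect_of_position_eq_zero (h : IsNewtonMotion f u v) (hf : ContDiff ℝ 1 f)
    (hodd : Function.Odd f) {s : ℝ} (hs : u s = 0) (t : ℝ) :
    u (2 * s - t) = -u t ∧ v (2 * s - t) = v t := by
  have hmid : 2 * s - s = s := by ring
  obtain ⟨hu, hv⟩ := h.unique hf ((h.timeReversal (2 * s)).neg hodd) (s := s) (by simp [hmid, hs])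
    (by simp [hmid]) t
  exact ⟨by rw [hu, neg_neg], by rw [hv, neg_neg]⟩

lemma antiperiodic (h : IsNewtonMotion f u v) (hf : ContDiff ℝ 1 f) (hodd : Function.Odd f)
    {t₀ τ : ℝ} (hu : u t₀ = 0) (hv : v (t₀ + τ) = 0) :
    Function.Antiperiodic u (2 * τ) ∧ Function.Antiperiodic v (2 * τ) := by
  have hcomp (t : ℝ) : t + 2 * τ = 2 * (t₀ + τ) - (2 * t₀ - t) := by ring
  have hturn := h.reflect_of_velocity_eq_zero hf hv
  have hcross := h.reflect_of_position_eq_zero hf hodd hu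
  constructor <;> intro t
  · rw [hcomp, (hturn _).1, (hcross t).1]
  · rw [hcomp, (hturn _).2, (hcross t).2]

end Symmetries

section Energy

lemma energy_eq (h : IsNewtonMotion f u v) (hF : ∀ x, HasDerivAt F (f x) x) (s t : ℝ) :
    v s ^ 2 / 2 + F (u s) = v t ^ 2 / 2 + F (u t) := by
  have hderiv : ∀ r, HasDerivAt (fun t => v t ^ 2 / 2 + F (u t)) 0 r := fun r => by
    have hkinetic := ((h.hasDerivAt_velocity r).fun_pow 2).div_const 2
    have hpotential := (hF (u r)).comp r (h.hasDerivAt_position r)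
    convert! hkinetic.add hpotential using 1
    simp
    ring
  exact is_const_of_deriv_eq_zero (fun r => (hderiv r).differentiableAt)
    (fun r => (hderiv r).deriv) s t

lemma integral_eq_sub_of_velocity_pos (h : IsNewtonMotion f u v) {E : ℝ}
    (hE : ∀ t, v t ^ 2 / 2 + F (u t) = E) {a b : ℝ} (hab : a ≤ b)
    (hv : ∀ t ∈ Set.Ioo a b, 0 < v t) :
    ∫ x in u a..u b, (2 * (E - F x)) ^ (-(1 / 2) : ℝ) = b - a := by
  have hslowness : ∀ t ∈ Set.Ioo a b, v t • (2 * (E - F (u t))) ^ (-(1 / 2) : ℝ) = 1 := by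
    intro t ht
    have hsq : 2 * (E - F (u t)) = v t ^ 2 := by linarith [hE t]
    rw [hsq, Real.rpow_neg (sq_nonneg _), ← Real.sqrt_eq_rpow, Real.sqrt_sq (hv t ht).le,
      smul_eq_mul, mul_inv_cancel₀ (hv t ht).ne']
  calc ∫ x in u a..u b, (2 * (E - F x)) ^ (-(1 / 2) : ℝ)
      = ∫ t in a..b, v t • (2 * (E - F (u t))) ^ (-(1 / 2) : ℝ) := by
        refine (intervalIntegral.integral_deriv_smul_comp_of_deriv_nonneg
          (HasDerivAt.continuousOn fun t _ => h.hasDerivAt_position t)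
          (fun t _ => h.hasDerivAt_position t) fun t ht => ?_).symm
        rw [min_eq_left hab, max_eq_right hab] at ht
        exact (hv t ht).le
    _ = ∫ _ in a..b, (1 : ℝ) := by
        rw [intervalIntegral.integral_of_le hab, intervalIntegral.integral_of_le hab,
          integral_Ioc_eq_integral_Ioo, integral_Ioc_eq_integral_Ioo]
        exact setIntegral_congr_fun measurableSet_Ioo hslowness
    _ = b - a := by simp

end Energy

section RestoringForce

lemma exists_position_nonpos (h : IsNewtonMotion f u v) (hf : Continuous f)
    (hpos : ∀ x, 0 < x → 0 < f x) {B : ℝ} (hB : ∀ t, u t ≤ B) (a : ℝ) :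
    ∃ t, a ≤ t ∧ u t ≤ 0 := by
  by_contra! hu
  have hv_anti : AntitoneOn v (Set.Ici a) :=
    antitoneOn_of_hasDerivWithinAt_nonpos (convex_Ici a)
      (HasDerivAt.continuousOn fun t _ => h.hasDerivAt_velocity t)
      (fun t _ => (h.hasDerivAt_velocity t).hasDerivWithinAt)
      fun t ht => neg_nonpos.2 (hpos _ (hu t (interior_subset ht))).le
  have hv_nonneg : ∀ s, a ≤ s → 0 ≤ v s := by
    intro s has
    by_contra! hvs
    obtain ⟨t, hst, hut⟩ := exists_neg_of_hasDerivAt_le_neg (a := s)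
      (fun t _ => h.hasDerivAt_position t) (neg_pos.2 hvs)
      fun t hst => (hv_anti has (has.trans hst) hst).trans_eq (neg_neg _).symm
    exact hut.not_gt (hu t (has.trans hst))
  have hu_mono : MonotoneOn u (Set.Ici a) :=
    monotoneOn_of_hasDerivWithinAt_nonneg (convex_Ici a)
      (HasDerivAt.continuousOn fun t _ => h.hasDerivAt_position t)
      (fun t _ => (h.hasDerivAt_position t).hasDerivWithinAt)
      fun t ht => hv_nonneg t (interior_subset ht)
  obtain ⟨m, hm, hfm⟩ := isCompact_Icc.exists_isMinOn ⟨u a, le_rfl, hB a⟩ hf.continuousOn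
  obtain ⟨t, hat, hvt⟩ := exists_neg_of_hasDerivAt_le_neg (a := a)
    (fun t _ => h.hasDerivAt_velocity t) (hpos m ((hu a le_rfl).trans_le hm.1))
    fun t hat => neg_le_neg (hfm ⟨hu_mono Set.self_mem_Ici hat hat, hB t⟩)
  exact hvt.not_ge (hv_nonneg t hat)

lemma exists_position_eq_zero (h : IsNewtonMotion f u v) (hf : Continuous f)
    (hodd : Function.Odd f) (hpos : ∀ x, 0 < x → 0 < f x) {B : ℝ} (hB : ∀ t, |u t| ≤ B) :
    ∃ t, u t = 0 := by
  have hcont : Continuous u :=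
    continuous_iff_continuousAt.2 fun t => (h.hasDerivAt_position t).continuousAt
  obtain ⟨a, -, ha⟩ :=
    h.exists_position_nonpos hf hpos (fun t => (le_abs_self _).trans (hB t)) 0
  obtain ⟨b, -, hb⟩ :=
    (h.neg hodd).exists_position_nonpos hf hpos (fun t => (neg_le_abs _).trans (hB t)) 0
  exact mem_range_of_exists_le_of_exists_ge hcont ⟨a, ha⟩ ⟨b, neg_nonpos.1 hb⟩

lemma exists_turning_time (h : IsNewtonMotion f u v) (hf : Continuous f)
    (hpos : ∀ x, 0 < x → 0 < f x) {B : ℝ} (hB : ∀ t, u t ≤ B) {t₀ : ℝ} (hu : u t₀ = 0)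
    (hv : 0 < v t₀) : ∃ t₁, t₀ < t₁ ∧ v t₁ = 0 ∧ ∀ t ∈ Set.Ico t₀ t₁, 0 < v t := by
  obtain ⟨b, hb, hvb⟩ : ∃ b, t₀ ≤ b ∧ v b ≤ 0 := by
    by_contra! hv_pos
    have hu_mono := strictMonoOn_Ici_of_hasDerivAt_pos h.hasDerivAt_position
      fun t ht => hv_pos t ht.le
    obtain ⟨t, ht, hut⟩ := h.exists_position_nonpos hf hpos hB (t₀ + 1)
    have ht₀t : t₀ < t := (lt_add_one t₀).trans_le ht
    exact hut.not_gt (hu ▸ hu_mono Set.self_mem_Ici ht₀t.le ht₀t)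
  exact exists_first_zero (HasDerivAt.continuousOn fun t _ => h.hasDerivAt_velocity t) hb hv hvb

lemma velocity_add_quarterPeriod_eq_zero (h : IsNewtonMotion f u v) (hf : Continuous f)
    (hpos : ∀ x, 0 < x → 0 < f x) (hF_mono : StrictMonoOn F (Set.Ici 0)) {E U : ℝ} (hU : 0 ≤ U)
    (hFU : F U = E) (hu_le : ∀ t, u t ≤ U) (hE : ∀ t, v t ^ 2 / 2 + F (u t) = E) {t₀ : ℝ}
    (hu : u t₀ = 0) (hv : 0 < v t₀) : v (t₀ + quarterPeriod F E U) = 0 := by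
  obtain ⟨t₁, hlt, hvt₁, hv_pos⟩ := h.exists_turning_time hf hpos hu_le hu hv
  have hu_nonneg : 0 ≤ u t₁ := by
    have hu_mono : MonotoneOn u (Set.Icc t₀ t₁) :=
      monotoneOn_of_hasDerivWithinAt_nonneg (convex_Icc t₀ t₁)
        (HasDerivAt.continuousOn fun t _ => h.hasDerivAt_position t)
        (fun t _ => (h.hasDerivAt_position t).hasDerivWithinAt)
        fun t ht => (hv_pos t (Set.Ioo_subset_Ico_self (by rwa [interior_Icc] at ht))).le
    exact hu ▸ hu_mono (Set.left_mem_Icc.2 hlt.le) (Set.right_mem_Icc.2 hlt.le) hlt.le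
  have hamplitude : u t₁ = U := hF_mono.injOn hu_nonneg hU (by simpa [hvt₁, hFU] using hE t₁)
  have htime : quarterPeriod F E U = t₁ - t₀ := by
    have hint := h.integral_eq_sub_of_velocity_pos hE hlt.le
      fun t ht => hv_pos t (Set.Ioo_subset_Ico_self ht)
    rwa [hu, hamplitude] at hint
  rw [htime, add_sub_cancel, hvt₁]

lemma exists_velocity_add_quarterPeriod_eq_zero (h : IsNewtonMotion f u v) (hf : Continuous f)
    (hodd : Function.Odd f) (hpos : ∀ x, 0 < x → 0 < f x) (hF : ∀ x, HasDerivAt F (f x) x)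
    {E U : ℝ} (hU : 0 < U) (hFU : F U = E) (hE : v 0 ^ 2 / 2 + F (u 0) = E) :
    ∃ t₀, u t₀ = 0 ∧ v (t₀ + quarterPeriod F E U) = 0 := by
  have hF_even := even_of_hasDerivAt_odd hF hodd
  have hF_mono := strictMonoOn_Ici_of_hasDerivAt_pos hF hpos
  have hE_all : ∀ t, v t ^ 2 / 2 + F (u t) = E := fun t => (h.energy_eq hF t 0).trans hE
  have hbound : ∀ t, |u t| ≤ U := fun t =>
    abs_le_of_sq_add_even_eq hF_even hF_mono hU.le ((hE_all t).trans hFU.symm)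
  obtain ⟨t₀, hu⟩ := h.exists_position_eq_zero hf hodd hpos hbound
  refine ⟨t₀, hu, ?_⟩
  have hv_ne : v t₀ ≠ 0 := by
    intro hv
    have hF_eq : F 0 = F U := by simpa [hu, hv, hFU] using hE_all t₀
    exact (hF_mono Set.self_mem_Ici hU.le hU).ne hF_eq
  rcases hv_ne.lt_or_gt with hv_neg | hv_pos
  · refine neg_eq_zero.1 ((h.neg hodd).velocity_add_quarterPeriod_eq_zero hf hpos hF_mono hU.le
      hFU (fun t => (neg_le_abs _).trans (hbound t)) (fun t => ?_) (neg_eq_zero.2 hu)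
      (neg_pos.2 hv_neg))
    rw [neg_sq, hF_even, hE_all]
  · exact h.velocity_add_quarterPeriod_eq_zero hf hpos hF_mono hU.le hFU
      (fun t => (le_abs_self _).trans (hbound t)) hE_all hu hv_pos

end RestoringForce

end IsNewtonMotion

theorem dispersionless_periodicity_general {f F u v : ℝ → ℝ} (hf : ContDiff ℝ 1 f)
    (hodd : Function.Odd f) (hpos : ∀ x, 0 < x → 0 < f x) (hF : ∀ x, HasDerivAt F (f x) x)
    (h : IsNewtonMotion f u v) {E U : ℝ} (hU : 0 < U) (hFU : F U = E)
    (hE : v 0 ^ 2 / 2 + F (u 0) = E) :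
    Function.Periodic u (4 * quarterPeriod F E U) ∧
      Function.Periodic v (4 * quarterPeriod F E U) := by
  obtain ⟨t₀, hu, hv⟩ :=
    h.exists_velocity_add_quarterPeriod_eq_zero hf.continuous hodd hpos hF hU hFU hE
  obtain ⟨hu_anti, hv_anti⟩ := h.antiperiodic hf hodd hu hv
  have hfour : 4 * quarterPeriod F E U = 2 * (2 * quarterPeriod F E U) := by ring
  rw [hfour]
  exact ⟨hu_anti.periodic_two_mul, hv_anti.periodic_two_mul⟩

/-- The potential of the force `x ^ k`, normalised to vanish at the origin. -/
noncomputable def powerPotential (k : ℕ) (x : ℝ) : ℝ :=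
  x ^ (k + 1) / ((k : ℝ) + 1)

lemma hasDerivAt_powerPotential (k : ℕ) (x : ℝ) : HasDerivAt (powerPotential k) (x ^ k) x := by
  have hk : (k : ℝ) + 1 ≠ 0 := by positivity
  have hderiv := (hasDerivAt_pow (k + 1) x).div_const ((k : ℝ) + 1)
  rwa [Nat.cast_succ, Nat.add_sub_cancel, mul_div_cancel_left₀ _ hk] at hderiv

lemma powerPotential_rpow {k : ℕ} {H : ℝ} (hH : 0 ≤ H) :
    powerPotential k ((((k : ℝ) + 1) * H) ^ ((1 : ℝ) / ((k : ℝ) + 1))) = H := by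
  have hk : (0 : ℝ) < (k : ℝ) + 1 := by positivity
  have hroot : ((((k : ℝ) + 1) * H) ^ ((1 : ℝ) / ((k : ℝ) + 1))) ^ (k + 1) = ((k : ℝ) + 1) * H := by
    simpa using Real.rpow_inv_natCast_pow (mul_nonneg hk.le hH) k.succ_ne_zero
  rw [powerPotential, hroot, mul_div_cancel_left₀ _ hk.ne']

lemma kinetic_add_powerPotential_pos {k : ℕ} (hk : Odd k) {x y : ℝ} (hxy : (x, y) ≠ (0, 0)) :
    0 < y ^ 2 / 2 + powerPotential k x := by
  unfold powerPotential
  by_cases hx : x = 0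
  · have hy : y ≠ 0 := fun hy => hxy (by rw [hx, hy])
    simp only [hx, zero_pow k.succ_ne_zero]
    positivity
  · have hpow : 0 < x ^ (k + 1) := hk.add_one.pow_pos hx
    positivity

theorem dispersionless_periodicity (k : ℕ) (hk_odd : Odd k) (hk_pos : 0 < k)
    (u₀ v₀ : ℝ) (hne : (u₀, v₀) ≠ (0, 0)) (u v : ℝ → ℝ)
    (hu0 : u 0 = u₀) (hv0 : v 0 = v₀)
    (hu : ∀ t : ℝ, HasDerivAt u (v t) t)
    (hv : ∀ t : ℝ, HasDerivAt v (-(u t ^ k)) t) :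
    let H₀ : ℝ := v₀ ^ 2 / 2 + u₀ ^ (k + 1) / ((k : ℝ) + 1)
    let U : ℝ := (((k : ℝ) + 1) * H₀) ^ ((1 : ℝ) / ((k : ℝ) + 1))
    let T : ℝ := 4 * ∫ x in (0 : ℝ)..U,
        (2 * (H₀ - x ^ (k + 1) / ((k : ℝ) + 1))) ^ (-(1 / 2) : ℝ)
    0 < H₀ ∧ ∀ t : ℝ, u (t + T) = u t ∧ v (t + T) = v t := by
  intro H₀ U T
  have hH : 0 < H₀ := kinetic_add_powerPotential_pos hk_odd hne
  obtain ⟨hu_per, hv_per⟩ := dispersionless_periodicity_general (f := fun x => x ^ k) (by fun_prop)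
    hk_odd.neg_pow (fun _ hx => pow_pos hx k) (hasDerivAt_powerPotential k) ⟨hu, hv⟩
    (U := U) (by positivity) (powerPotential_rpow hH.le) (by rw [hu0, hv0]; rfl)
  exact ⟨hH, fun t => ⟨hu_per t, hv_per t⟩⟩
end
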